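/- Assume Δτ > 0, and define the localized periodic approximation of the Green's function ĝ(w, r) = (1/(P†Q†)) ∑_{(s,z) ∈ ℤ²} e^{2πi s w/P†} e^{2πi z r/Q†} G(η_s, ξ_z, Δτ) (an absolutely convergent sum). Let ŵ₀, r̂₀ ∈ ℝ, set w_n = ŵ₀ + nΔw and r_k = r̂₀ + kΔr for integers n, k, and let φ_l and ψ_d be the hat basis functions centered at w_l with half-width Δw and at r_d with half-width Δr, respectively. Then for all integers n, l, k, d, the exact projected weight equals the Fourier series: (1/(ΔwΔr)) ∫_ℝ ∫_ℝ φ_l(w) ψ_d(r) ĝ(w_n − w, r_k − r) dw dr = (1/(P†Q†)) ∑_{(s,z) ∈ ℤ²} e^{2πi s(n−l)/N†} e^{2πi z(k−d)/K†} tg(s, z) G(η_s, ξ_z, Δτ). -/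

import Mathlib

open Real MeasureTheory

noncomputable section

/-- Fourier transform of the jump density `b`. -/
def Bfun (b : ℝ → ℝ) (η : ℝ) : ℂ :=
  ∫ y : ℝ, (b y : ℂ) * Complex.exp (-(2 * (π : ℂ) * Complex.I * η * y))

/-- Fourier symbol `Ψ` of the Green's function. -/
def Psi (σZ σR ρ lam κ : ℝ) (b : ℝ → ℝ) (η ξ : ℝ) : ℂ :=
  ((-(σZ ^ 2 / 2) * (2 * π * η) ^ 2 - ρ * σZ * σR * (2 * π * η) * (2 * π * ξ)
      - σR ^ 2 / 2 * (2 * π * ξ) ^ 2 - lam : ℝ) : ℂ)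
    - ((lam * κ : ℝ) : ℂ) * (2 * (π : ℂ) * Complex.I * η)
    + ((lam : ℝ) : ℂ) * (starRingEnd ℂ) (Bfun b η)

/-- Fourier transform `G(η, ξ, Δτ) = exp(Ψ(η, ξ) Δτ)` of the Green's function. -/
def Gfun (σZ σR ρ lam κ : ℝ) (b : ℝ → ℝ) (Δτ η ξ : ℝ) : ℂ :=
  Complex.exp (Psi σZ σR ρ lam κ b η ξ * Δτ)

/-- `sin² x / x²`, interpreted as `1` at `x = 0`. -/
def sinc2 (x : ℝ) : ℝ := if x = 0 then 1 else Real.sin x ^ 2 / x ^ 2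

/-- Trigonometric factor `tg(s, z)`. -/
def tg (Nd Kd : ℕ) (s z : ℤ) : ℝ := sinc2 (π * s / Nd) * sinc2 (π * z / Kd)

/-- Piecewise linear ('hat') basis function with half-width `Δ`, centered at `c`. -/
def hat (Δ c w : ℝ) : ℝ :=
  if c ≤ w ∧ w ≤ c + Δ then (c + Δ - w) / Δ
  else if c - Δ ≤ w ∧ w ≤ c then (w - (c - Δ)) / Δ
  else 0

/-- Localized periodic approximation `ĝ(w, r)` of the Green's function. -/
def ghat (σZ σR ρ lam κ : ℝ) (b : ℝ → ℝ) (Pd Qd Δτ : ℝ) (w r : ℝ) : ℂ :=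
  (1 / ((Pd : ℂ) * Qd)) *
    ∑' sz : ℤ × ℤ,
      Complex.exp (2 * (π : ℂ) * Complex.I * sz.1 * w / Pd) *
        Complex.exp (2 * (π : ℂ) * Complex.I * sz.2 * r / Qd) *
        Gfun σZ σR ρ lam κ b Δτ (sz.1 / Pd) (sz.2 / Qd)

lemma hat_eq_max {Δ : ℝ} (hΔ : 0 < Δ) (c w : ℝ) : hat Δ c w = max 0 (1 - |w - c| / Δ) := by
  unfold hat
  split_ifs with h1 h2
  · rw [abs_of_nonneg (by linarith), max_eq_right]
    · field_simp
      ring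
    · rw [sub_nonneg, div_le_one hΔ]; linarith
  · rw [abs_of_nonpos (by linarith), max_eq_right]
    · field_simp
      ring
    · rw [sub_nonneg, div_le_one hΔ]; linarith
  · rw [max_eq_left]
    rw [sub_nonpos, one_le_div hΔ]
    by_contra h
    push Not at h
    rw [abs_lt] at h
    rcases le_total c w with hc | hc
    · exact h1 ⟨hc, by linarith⟩
    · exact h2 ⟨by linarith, hc⟩

lemma hat_continuous {Δ : ℝ} (hΔ : 0 < Δ) (c : ℝ) : Continuous (hat Δ c) := by
  have : hat Δ c = fun w => max 0 (1 - |w - c| / Δ) := funext (hat_eq_max hΔ c)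
  rw [this]
  fun_prop

lemma hat_zero_outside {Δ : ℝ} (hΔ : 0 < Δ) (c w : ℝ) (h : w ∉ Set.Ioc (c - Δ) (c + Δ)) :
    hat Δ c w = 0 := by
  rw [hat_eq_max hΔ, max_eq_left]
  rw [sub_nonpos, one_le_div hΔ]
  by_contra h'
  push Not at h'
  rw [abs_lt] at h'
  exact h ⟨by linarith, by linarith⟩

lemma hat_integrable {Δ : ℝ} (hΔ : 0 < Δ) (c : ℝ) :
    Integrable (fun w => ((hat Δ c w : ℝ) : ℂ)) := by
  apply Continuous.integrable_of_hasCompactSupport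
  · exact Complex.continuous_ofReal.comp (hat_continuous hΔ c)
  · apply HasCompactSupport.intro (isCompact_Icc (a := c - Δ) (b := c + Δ))
    intro x hx
    rw [hat_zero_outside hΔ c x (fun h => hx ⟨h.1.le, h.2⟩)]
    simp

lemma hat_integral_split {Δ : ℝ} (hΔ : 0 < Δ) (c : ℝ) (E : ℝ → ℂ) (hE : Continuous E) :
    ∫ w, ((hat Δ c w : ℝ) : ℂ) * E w =
      (∫ w in (c - Δ)..c, (((w - (c - Δ)) / Δ : ℝ) : ℂ) * E w) +
      ∫ w in c..(c + Δ), (((c + Δ - w) / Δ : ℝ) : ℂ) * E w := by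
  have hcont : Continuous (fun w => ((hat Δ c w : ℝ) : ℂ) * E w) :=
    (Complex.continuous_ofReal.comp (hat_continuous hΔ c)).mul hE
  rw [← setIntegral_eq_integral_of_forall_compl_eq_zero (s := Set.Ioc (c - Δ) (c + Δ))
    (fun x hx => by rw [hat_zero_outside hΔ c x hx]; simp),
    ← intervalIntegral.integral_of_le (by linarith),
    ← intervalIntegral.integral_add_adjacent_intervals (b := c)
      (hcont.intervalIntegrable _ _) (hcont.intervalIntegrable _ _)]
  congr 1
  · apply intervalIntegral.integral_congr
    intro x hx
    rw [Set.uIcc_of_le (by linarith)] at hx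
    simp only
    rw [hat_eq_max hΔ, abs_of_nonpos (by linarith [hx.2]), max_eq_right]
    · congr 2
      field_simp
      ring
    · rw [sub_nonneg, div_le_one hΔ]; linarith [hx.1]
  · apply intervalIntegral.integral_congr
    intro x hx
    rw [Set.uIcc_of_le (by linarith)] at hx
    simp only
    rw [hat_eq_max hΔ, abs_of_nonneg (by linarith [hx.1]), max_eq_right]
    · congr 2
      field_simp
      ring
    · rw [sub_nonneg, div_le_one hΔ]; linarith [hx.2]

lemma hat_integral_exp {Δ : ℝ} (hΔ : 0 < Δ) (c x : ℝ) (a : ℂ) (ha : a ≠ 0) :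
    ∫ w, ((hat Δ c w : ℝ) : ℂ) * Complex.exp (a * (x - w)) =
      Complex.exp (a * (x - c)) * (Complex.exp (a * Δ) + Complex.exp (-(a * Δ)) - 2)
        / (Δ * a ^ 2) := by
  have hΔc : (Δ : ℂ) ≠ 0 := by exact_mod_cast hΔ.ne'
  rw [hat_integral_split hΔ c _ (by fun_prop)]
  have he : ∀ w : ℝ, HasDerivAt (fun w : ℝ => Complex.exp (a * (x - w)))
      (-a * Complex.exp (a * (x - w))) w := by
    intro w
    have h1 : HasDerivAt (fun w : ℝ => a * ((x : ℂ) - w)) (a * (-1)) w :=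
      ((Complex.ofRealCLM.hasDerivAt (x := w)).const_sub (x : ℂ)).const_mul a
    convert h1.cexp using 1
    ring
  have hl : ∀ (p q : ℂ) (w : ℝ), HasDerivAt (fun w : ℝ => p + q * (w : ℂ)) q w := by
    intro p q w
    have h1 : HasDerivAt (fun w : ℝ => p + q * (w : ℂ)) (q * 1) w :=
      ((Complex.ofRealCLM.hasDerivAt (x := w)).const_mul q).const_add p
    simpa using h1
  have key : ∀ (p q : ℂ) (u v : ℝ),
      ∫ w in u..v, (p + q * (w : ℂ)) * Complex.exp (a * (x - w)) =
        (-(p + q * (v : ℂ)) / a - q / a ^ 2) * Complex.exp (a * (x - v)) -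
        (-(p + q * (u : ℂ)) / a - q / a ^ 2) * Complex.exp (a * (x - u)) := by
    intro p q u v
    have hd : ∀ w : ℝ, HasDerivAt
        (fun w : ℝ => (-(p + q * (w : ℂ)) / a - q / a ^ 2) * Complex.exp (a * (x - w)))
        ((p + q * (w : ℂ)) * Complex.exp (a * (x - w))) w := by
      intro w
      have hm := ((((hl p q w).neg).div_const a).sub_const (q / a ^ 2)).mul (he w)
      refine HasDerivAt.congr_deriv hm ?_
      simp only [Pi.neg_apply]
      field_simp
      ring
    exact intervalIntegral.integral_eq_sub_of_hasDerivAt (fun w _ => hd w)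
      (Continuous.intervalIntegrable (by fun_prop) _ _)
  have e1 : ∀ w : ℝ, (((w - (c - Δ)) / Δ : ℝ) : ℂ) = (-(c - Δ) / Δ : ℂ) + (1 / Δ : ℂ) * w := by
    intro w; push_cast; field_simp; ring
  have e2 : ∀ w : ℝ, (((c + Δ - w) / Δ : ℝ) : ℂ) = ((c + Δ) / Δ : ℂ) + (-1 / Δ : ℂ) * w := by
    intro w; push_cast; field_simp; ring
  simp_rw [e1, e2]
  rw [key, key]
  have x1 : Complex.exp (a * (x - ((c - Δ : ℝ) : ℂ))) =
      Complex.exp (a * (x - c)) * Complex.exp (a * Δ) := by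
    rw [← Complex.exp_add]; congr 1; push_cast; ring
  have x2 : Complex.exp (a * (x - ((c + Δ : ℝ) : ℂ))) =
      Complex.exp (a * (x - c)) * Complex.exp (-(a * Δ)) := by
    rw [← Complex.exp_add]; congr 1; push_cast; ring
  rw [x1, x2]
  push_cast
  field_simp
  ring

lemma hat_integral_one {Δ : ℝ} (hΔ : 0 < Δ) (c : ℝ) :
    ∫ w, ((hat Δ c w : ℝ) : ℂ) = Δ := by
  have h := hat_integral_split hΔ c (fun _ => 1) continuous_const
  simp only [mul_one] at h
  rw [h, intervalIntegral.integral_ofReal, intervalIntegral.integral_ofReal]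
  simp only [intervalIntegral.integral_div, integral_id,
    intervalIntegral.integral_sub (f := fun x : ℝ => x) (g := fun _ => c - Δ)
      (continuous_id.intervalIntegrable _ _) (continuous_const.intervalIntegrable _ _),
    intervalIntegral.integral_sub (g := fun x : ℝ => x) (f := fun _ => c + Δ)
      (continuous_const.intervalIntegrable _ _) (continuous_id.intervalIntegrable _ _),
    intervalIntegral.integral_const, smul_eq_mul]
  rw [← Complex.ofReal_add]
  congr 1
  field_simp
  ring

lemma hat_fourier {P Δ : ℝ} {N : ℕ} (hP : 0 < P) (hN : 0 < N) (hΔ : Δ = P / N)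
    (x0 : ℝ) (n l s : ℤ) :
    ∫ w, ((hat Δ (x0 + l * Δ) w : ℝ) : ℂ) *
        Complex.exp (2 * (π : ℂ) * Complex.I * s * ((x0 + n * Δ - w : ℝ) : ℂ) / P) =
      Δ * (Complex.exp (2 * (π : ℂ) * Complex.I * s * (n - l) / N) *
        ((sinc2 (π * s / N) : ℝ) : ℂ)) := by
  have hNr : (0 : ℝ) < N := by exact_mod_cast hN
  have hΔ0 : 0 < Δ := by rw [hΔ]; positivity
  have hNc : (N : ℂ) ≠ 0 := by exact_mod_cast hN.ne'
  have hPc : (P : ℂ) ≠ 0 := by exact_mod_cast hP.ne'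
  have hΔc : (Δ : ℂ) ≠ 0 := by exact_mod_cast hΔ0.ne'
  have hπc : (π : ℂ) ≠ 0 := by exact_mod_cast Real.pi_ne_zero
  have hΔP : (Δ : ℂ) = P / N := by rw [hΔ]; push_cast; rfl
  rcases eq_or_ne s 0 with rfl | hs
  · simp [sinc2, hat_integral_one hΔ0]
  have hsc : (s : ℂ) ≠ 0 := by exact_mod_cast hs
  have hsr : (s : ℝ) ≠ 0 := by exact_mod_cast hs
  have ha : (2 * (π : ℂ) * Complex.I * s / P) ≠ 0 := by
    simp [hπc, hsc, hPc]
  have h := hat_integral_exp hΔ0 (x0 + l * Δ) (x0 + n * Δ) _ ha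
  have e : ∀ w : ℝ, Complex.exp (2 * (π : ℂ) * Complex.I * s * ((x0 + n * Δ - w : ℝ) : ℂ) / P) =
      Complex.exp (2 * (π : ℂ) * Complex.I * s / P * (((x0 + n * Δ : ℝ) : ℂ) - w)) := by
    intro w; congr 1; push_cast; ring
  simp_rw [e]
  rw [h]
  have e3 : 2 * (π : ℂ) * Complex.I * s / P *
      (((x0 + n * Δ : ℝ) : ℂ) - ((x0 + l * Δ : ℝ) : ℂ)) =
      2 * (π : ℂ) * Complex.I * s * (n - l) / N := by
    push_cast; rw [hΔP]; field_simp; ring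
  have e4 : 2 * (π : ℂ) * Complex.I * s / P * Δ = 2 * ((π * s / N : ℂ) * Complex.I) := by
    rw [hΔP]; field_simp
  rw [e3, e4]
  have hθ : π * s / N ≠ 0 := by positivity
  have hs2 : ((sinc2 (π * s / N) : ℝ) : ℂ) =
      Complex.sin (π * s / N) ^ 2 / (π * s / N : ℂ) ^ 2 := by
    rw [sinc2, if_neg hθ]; push_cast; rfl
  rw [hs2]
  have e5 : Complex.exp (2 * ((π * s / N : ℂ) * Complex.I)) +
      Complex.exp (-(2 * ((π * s / N : ℂ) * Complex.I))) - 2 = -4 * Complex.sin (π * s / N) ^ 2 := by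
    have : ∀ θ : ℂ, Complex.exp (2 * (θ * Complex.I)) +
      Complex.exp (-(2 * (θ * Complex.I))) - 2 = -4 * Complex.sin θ ^ 2 := by
      intro θ
      have h1 : Complex.exp (2 * (θ * Complex.I)) + Complex.exp (-(2 * (θ * Complex.I)))
          = 2 * Complex.cos (2 * θ) := by
        rw [Complex.two_cos]
        congr 2 <;> ring
      rw [h1, Complex.cos_two_mul, Complex.cos_sq']
      ring
    exact this _
  rw [e5, hΔP]
  field_simp
  rw [Complex.I_sq]
  ring

lemma abs_form {ρ : ℝ} (hρ : |ρ| < 1) (a c : ℝ) :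
    -(a ^ 2 / 2) - ρ * a * c - c ^ 2 / 2 ≤ -((1 - |ρ|) / 2) * a ^ 2 + -((1 - |ρ|) / 2) * c ^ 2 := by
  have h1 : -(ρ * a * c) ≤ |ρ| * (|a| * |c|) := by
    rw [← abs_mul, ← abs_mul, ← mul_assoc]; exact neg_le_abs _
  nlinarith [sq_nonneg (|a| - |c|), sq_abs a, sq_abs c, abs_nonneg ρ]

lemma norm_Bfun_le (b : ℝ → ℝ) (hb0 : ∀ y, 0 ≤ b y) (hb1 : ∫ y : ℝ, b y = 1) (η : ℝ) :
    ‖Bfun b η‖ ≤ 1 := by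
  unfold Bfun
  refine (norm_integral_le_integral_norm _).trans ?_
  rw [← hb1]
  apply le_of_eq
  congr 1
  ext y
  rw [norm_mul, Complex.norm_exp]
  simp [abs_of_nonneg (hb0 y)]

lemma Gfun_bound (σZ σR ρ lam κ Δτ : ℝ) (b : ℝ → ℝ) (hρ : |ρ| < 1) (hlam : 0 ≤ lam)
    (hb0 : ∀ y, 0 ≤ b y) (hb1 : ∫ y : ℝ, b y = 1) (hΔτ : 0 < Δτ) (η ξ : ℝ) :
    ‖Gfun σZ σR ρ lam κ b Δτ η ξ‖ ≤
      Real.exp (-((1 - |ρ|) / 2 * Δτ * (σZ * (2 * π)) ^ 2) * η ^ 2) *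
      Real.exp (-((1 - |ρ|) / 2 * Δτ * (σR * (2 * π)) ^ 2) * ξ ^ 2) := by
  unfold Gfun
  rw [Complex.norm_exp, ← Real.exp_add, Real.exp_le_exp]
  have hre : (Psi σZ σR ρ lam κ b η ξ).re =
      (-(σZ ^ 2 / 2) * (2 * π * η) ^ 2 - ρ * σZ * σR * (2 * π * η) * (2 * π * ξ)
      - σR ^ 2 / 2 * (2 * π * ξ) ^ 2 - lam) + lam * (Bfun b η).re := by
    unfold Psi
    rw [Complex.add_re, Complex.sub_re, Complex.ofReal_re, Complex.re_ofReal_mul,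
      Complex.re_ofReal_mul, Complex.conj_re]
    simp
  have hB : (Bfun b η).re ≤ 1 := (Complex.re_le_norm _).trans (norm_Bfun_le b hb0 hb1 η)
  rw [Complex.re_mul_ofReal, hre]
  have h1 := abs_form hρ (σZ * (2 * π) * η) (σR * (2 * π) * ξ)
  have h2 : lam * (Bfun b η).re ≤ lam := by nlinarith
  calc _ ≤ (-((1 - |ρ|) / 2) * (σZ * (2 * π) * η) ^ 2 +
      -((1 - |ρ|) / 2) * (σR * (2 * π) * ξ) ^ 2) * Δτ := by
        apply mul_le_mul_of_nonneg_right _ hΔτ.le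
        refine le_trans ?_ h1
        linarith
    _ = _ := by ring

lemma summable_gauss {α : ℝ} (hα : 0 < α) : Summable (fun s : ℤ => Real.exp (-α * (s : ℝ) ^ 2)) := by
  have h := ((summable_jacobiTheta₂_term_iff 0 (((α / π : ℝ) : ℂ) * Complex.I)).2
    (by simp; positivity)).norm
  refine h.congr ?_
  intro s
  rw [jacobiTheta₂_term, mul_zero, zero_add, Complex.norm_exp]
  congr 1
  have : (π : ℂ) * Complex.I * (s : ℂ) ^ 2 * (((α / π : ℝ) : ℂ) * Complex.I) =
      ((-α * (s : ℝ) ^ 2 : ℝ) : ℂ) := by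
    have hπc : (π : ℂ) ≠ 0 := by exact_mod_cast Real.pi_ne_zero
    push_cast
    field_simp
    rw [Complex.I_sq]
    ring
  rw [this, Complex.ofReal_re]

lemma Gfun_summable (σZ σR ρ lam κ Δτ P Q : ℝ) (b : ℝ → ℝ) (hσZ : 0 < σZ) (hσR : 0 < σR)
    (hρ : |ρ| < 1) (hlam : 0 ≤ lam)
    (hb0 : ∀ y, 0 ≤ b y) (hb1 : ∫ y : ℝ, b y = 1) (hΔτ : 0 < Δτ) (hP : 0 < P) (hQ : 0 < Q) :
    Summable (fun sz : ℤ × ℤ => ‖Gfun σZ σR ρ lam κ b Δτ (sz.1 / P) (sz.2 / Q)‖) := by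
  have hr : 0 < 1 - |ρ| := by linarith
  have h1 := summable_gauss (α := (1 - |ρ|) / 2 * Δτ * (σZ * (2 * π)) ^ 2 / P ^ 2) (by positivity)
  have h2 := summable_gauss (α := (1 - |ρ|) / 2 * Δτ * (σR * (2 * π)) ^ 2 / Q ^ 2) (by positivity)
  have h3 := h1.mul_of_nonneg h2 (fun _ => (Real.exp_pos _).le) (fun _ => (Real.exp_pos _).le)
  refine Summable.of_nonneg_of_le (fun _ => norm_nonneg _) (fun sz => ?_) h3
  refine (Gfun_bound σZ σR ρ lam κ Δτ b hρ hlam hb0 hb1 hΔτ _ _).trans (le_of_eq ?_)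
  congr 2 <;> field_simp

lemma interchange {f g : ℝ → ℂ} (hf : Integrable f) (hg : Integrable g)
    {u v : ℤ → ℝ → ℂ} (hu : ∀ s, Continuous (u s)) (hv : ∀ z, Continuous (v z))
    (hu1 : ∀ s w, ‖u s w‖ = 1) (hv1 : ∀ z r, ‖v z r‖ = 1)
    {a : ℤ × ℤ → ℂ} (ha : Summable (fun sz => ‖a sz‖)) (C : ℂ) :
    ∫ w, ∫ r, f w * g r * (C * ∑' sz : ℤ × ℤ, u sz.1 w * v sz.2 r * a sz) =
      C * ∑' sz : ℤ × ℤ, (∫ w, f w * u sz.1 w) * (∫ r, g r * v sz.2 r) * a sz := by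
  have hfu : ∀ s, Integrable (fun w => f w * u s w) := fun s =>
    hf.mul_bdd (c := 1) (hu s).aestronglyMeasurable (Filter.Eventually.of_forall fun w => (hu1 s w).le)
  have hgv : ∀ z, Integrable (fun w => g w * v z w) := fun z =>
    hg.mul_bdd (c := 1) (hv z).aestronglyMeasurable (Filter.Eventually.of_forall fun w => (hv1 z w).le)
  have inner : ∀ w, ∫ r, f w * g r * (C * ∑' sz : ℤ × ℤ, u sz.1 w * v sz.2 r * a sz) =
      C * ∑' sz : ℤ × ℤ, (f w * u sz.1 w) * ((∫ r, g r * v sz.2 r) * a sz) := by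
    intro w
    have h := integral_tsum_of_summable_integral_norm (μ := volume)
      (F := fun (sz : ℤ × ℤ) r => u sz.1 w * a sz * (g r * v sz.2 r))
      (fun sz => (hgv sz.2).const_mul _) (by
        simp only [norm_mul, hu1, hv1, one_mul, mul_one, integral_const_mul]
        exact ha.mul_right _)
    have e : ∀ r, f w * g r * (C * ∑' sz : ℤ × ℤ, u sz.1 w * v sz.2 r * a sz) =
        C * f w * ∑' sz : ℤ × ℤ, u sz.1 w * a sz * (g r * v sz.2 r) := by
      intro r
      have : ∀ sz : ℤ × ℤ, u sz.1 w * a sz * (g r * v sz.2 r) =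
        g r * (u sz.1 w * v sz.2 r * a sz) := fun sz => by ring
      simp_rw [this, tsum_mul_left]
      ring
    simp_rw [e]
    rw [integral_const_mul, ← h]
    simp_rw [integral_const_mul]
    rw [mul_assoc, ← tsum_mul_left]
    congr 1
    apply tsum_congr
    intro sz
    ring
  simp_rw [inner]
  rw [integral_const_mul]
  congr 1
  have h := integral_tsum_of_summable_integral_norm (μ := volume)
      (F := fun (sz : ℤ × ℤ) w => (f w * u sz.1 w) * ((∫ r, g r * v sz.2 r) * a sz))
      (fun sz => (hfu sz.1).mul_const _) (by
        simp only [norm_mul, hu1, mul_one, integral_mul_const]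
        apply Summable.mul_left
        refine Summable.of_nonneg_of_le (fun _ => by positivity) (fun sz => ?_)
          (ha.mul_left (∫ r, ‖g r‖))
        apply mul_le_mul_of_nonneg_right _ (norm_nonneg _)
        refine (norm_integral_le_integral_norm _).trans (le_of_eq ?_)
        simp only [norm_mul, hv1, mul_one])
  rw [← h]
  apply tsum_congr
  intro sz
  rw [integral_mul_const]
  ring

/-- The exact projected weight of the localized periodic Green's function equals
its Fourier series:
`(1/(ΔwΔr)) ∬ φ_l(w) ψ_d(r) ĝ(w_n − w, r_k − r) dw dr =
(1/(P†Q†)) ∑_{(s,z) ∈ ℤ²} e^{2πi s(n−l)/N†} e^{2πi z(k−d)/K†} tg(s, z) G(η_s, ξ_z, Δτ)`. -/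
theorem projected_weight_eq_fourier_series
    (σZ σR ρ lam κ Pd Qd Δτ : ℝ) (b : ℝ → ℝ) (Nd Kd : ℕ)
    (hσZ : 0 < σZ) (hσR : 0 < σR) (hρ : |ρ| < 1) (hlam : 0 ≤ lam)
    (hb0 : ∀ y, 0 ≤ b y) (hbint : Integrable b) (hb1 : ∫ y : ℝ, b y = 1)
    (hPd : 0 < Pd) (hQd : 0 < Qd)
    (hNd : 0 < Nd) (hNde : Even Nd) (hKd : 0 < Kd) (hKde : Even Kd)
    (hΔτ : 0 < Δτ)
    (Δw Δr : ℝ) (hΔw : Δw = Pd / Nd) (hΔr : Δr = Qd / Kd)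
    (w₀ rr₀ : ℝ) (n l k d : ℤ) :
    ((1 / (Δw * Δr) : ℝ) : ℂ) *
        ∫ w : ℝ, ∫ r : ℝ,
          ((hat Δw (w₀ + l * Δw) w : ℝ) : ℂ) * ((hat Δr (rr₀ + d * Δr) r : ℝ) : ℂ) *
            ghat σZ σR ρ lam κ b Pd Qd Δτ (w₀ + n * Δw - w) (rr₀ + k * Δr - r) =
      (1 / ((Pd : ℂ) * Qd)) *
        ∑' sz : ℤ × ℤ,
          Complex.exp (2 * (π : ℂ) * Complex.I * sz.1 * (n - l) / Nd) *
            Complex.exp (2 * (π : ℂ) * Complex.I * sz.2 * (k - d) / Kd) *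
            ((tg Nd Kd sz.1 sz.2 : ℝ) : ℂ) *
            Gfun σZ σR ρ lam κ b Δτ (sz.1 / Pd) (sz.2 / Qd) := by
  have hNr : (0 : ℝ) < Nd := by exact_mod_cast hNd
  have hKr : (0 : ℝ) < Kd := by exact_mod_cast hKd
  have hw0 : 0 < Δw := by rw [hΔw]; positivity
  have hr0 : 0 < Δr := by rw [hΔr]; positivity
  have hwc : (Δw : ℂ) ≠ 0 := by exact_mod_cast hw0.ne'
  have hrc : (Δr : ℂ) ≠ 0 := by exact_mod_cast hr0.ne'
  have hnorm : ∀ (s : ℤ) (x P : ℝ), ‖Complex.exp (2 * (π : ℂ) * Complex.I * s * x / P)‖ = 1 := by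
    intro s x P
    have : 2 * (π : ℂ) * Complex.I * s * x / P = ((2 * π * s * x / P : ℝ) : ℂ) * Complex.I := by
      push_cast; ring
    rw [this, Complex.norm_exp_ofReal_mul_I]
  have h := interchange (hat_integrable hw0 (w₀ + l * Δw)) (hat_integrable hr0 (rr₀ + d * Δr))
    (u := fun s w => Complex.exp (2 * (π : ℂ) * Complex.I * s * ((w₀ + n * Δw - w : ℝ) : ℂ) / Pd))
    (v := fun z r => Complex.exp (2 * (π : ℂ) * Complex.I * z * ((rr₀ + k * Δr - r : ℝ) : ℂ) / Qd))
    (fun s => by fun_prop) (fun z => by fun_prop)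
    (fun s w => hnorm _ _ _) (fun z r => hnorm _ _ _)
    (Gfun_summable σZ σR ρ lam κ Δτ Pd Qd b hσZ hσR hρ hlam hb0 hb1 hΔτ hPd hQd)
    (1 / ((Pd : ℂ) * Qd))
  unfold ghat
  rw [h, mul_left_comm, ← tsum_mul_left]
  congr 1
  apply tsum_congr
  intro sz
  rw [hat_fourier hPd hNd hΔw, hat_fourier hQd hKd hΔr, tg]
  push_cast
  field_simp

end
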